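/- Let Ω be a measurable space, let P₀ and Q₀ be probability measures on Ω with TV(P₀, Q₀) < 1, let a, b ∈ ℝ with |a − b| ≥ γ for some γ > 0, let δ ∈ (0, 1/2], and let n ≥ 1. Then for every measurable estimator ψ̂ₙ : Ωⁿ → ℝ, (1−δ) · ∫⁻ |ψ̂ₙ − b| dQ₀^⊗n + δ · ∫⁻ |ψ̂ₙ − a| dP₀^⊗n ≥ (δγ/2) · (1 − TV(P₀, Q₀))ⁿ > 0. In particular, for fixed context length n, the average estimation risk under the two-point strategic prior is bounded below by a strictly positive constant proportional to δ, uniformly over all estimators. -/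

import Mathlib

/-!
The lattice infimum `P ⊓ Q` is the common part of two measures. A Hahn decomposition shows that its
mass is at least `1 - TV(P, Q)`, and monotonicity of products puts `⨂ᵢ (Pᵢ ⊓ Qᵢ)` below both product
measures, so these have a common part of mass at least `∏ᵢ (1 - TV(Pᵢ, Qᵢ))`. On the common part an
estimator pays both losses at once, and by the triangle inequality their sum is at least the
distance between the two targets. For the prior weights `1 - δ` and `δ ≤ 1 / 2` this gives
`δ γ (1 - TV)ⁿ`, twice the claimed bound.
-/

open MeasureTheory

/-- Total variation distance between two (finite) measures:
`TV(μ, ν) = sup over measurable sets A of |μ(A) − ν(A)|`. -/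
noncomputable def tvDist {Ω : Type*} [MeasurableSpace Ω] (μ ν : Measure Ω) : ℝ :=
  ⨆ A : {s : Set Ω // MeasurableSet s}, |(μ A.1).toReal - (ν A.1).toReal|

open scoped ENNReal

section TotalVariation

variable {Ω : Type*} [MeasurableSpace Ω]

lemma tvDist_nonneg (μ ν : Measure Ω) : 0 ≤ tvDist μ ν :=
  Real.iSup_nonneg fun _ => abs_nonneg _

variable (μ ν : Measure Ω) [IsFiniteMeasure ν]

lemma bddAbove_range_abs_measureReal_sub [IsFiniteMeasure μ] :
    BddAbove (Set.range fun A : {s : Set Ω // MeasurableSet s} => |μ.real A.1 - ν.real A.1|) := by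
  refine ⟨max (μ.real Set.univ) (ν.real Set.univ), ?_⟩
  rintro _ ⟨A, rfl⟩
  exact abs_sub_le_of_nonneg_of_le
    measureReal_nonneg (le_max_of_le_left (measureReal_mono A.1.subset_univ))
    measureReal_nonneg (le_max_of_le_right (measureReal_mono A.1.subset_univ))

lemma abs_measureReal_sub_le_tvDist [IsFiniteMeasure μ] {s : Set Ω} (hs : MeasurableSet s) :
    |μ.real s - ν.real s| ≤ tvDist μ ν :=
  le_ciSup (bddAbove_range_abs_measureReal_sub μ ν) ⟨s, hs⟩

lemma measure_univ_le_inf_univ_add_tvDist [IsFiniteMeasure μ] :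
    μ Set.univ ≤ (μ ⊓ ν) Set.univ + ENNReal.ofReal (tvDist μ ν) := by
  obtain ⟨s, hs⟩ := exists_isHahnDecomposition μ ν
  have restrict_add_le_inf : μ.restrict s + ν.restrict sᶜ ≤ μ ⊓ ν := by
    refine le_inf ?_ ?_
    · calc μ.restrict s + ν.restrict sᶜ ≤ μ.restrict s + μ.restrict sᶜ :=
          add_le_add le_rfl hs.ge_on_compl
        _ = μ := Measure.restrict_add_restrict_compl hs.measurableSet
    · calc μ.restrict s + ν.restrict sᶜ ≤ ν.restrict s + ν.restrict sᶜ :=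
          add_le_add hs.le_on le_rfl
        _ = ν := Measure.restrict_add_restrict_compl hs.measurableSet
  have measure_compl_le : μ sᶜ ≤ ν sᶜ + ENNReal.ofReal (tvDist μ ν) := by
    have hdiff : μ.real sᶜ - ν.real sᶜ ≤ tvDist μ ν :=
      (le_abs_self _).trans (abs_measureReal_sub_le_tvDist μ ν hs.measurableSet.compl)
    calc μ sᶜ = ENNReal.ofReal (μ.real sᶜ) := (ofReal_measureReal (μ := μ)).symm
      _ ≤ ENNReal.ofReal (ν.real sᶜ + tvDist μ ν) := ENNReal.ofReal_le_ofReal (by linarith)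
      _ ≤ ENNReal.ofReal (ν.real sᶜ) + ENNReal.ofReal (tvDist μ ν) := ENNReal.ofReal_add_le
      _ = ν sᶜ + ENNReal.ofReal (tvDist μ ν) := by rw [ofReal_measureReal]
  calc μ Set.univ = μ s + μ sᶜ := (measure_add_measure_compl hs.measurableSet).symm
    _ ≤ μ s + (ν sᶜ + ENNReal.ofReal (tvDist μ ν)) := by gcongr
    _ = (μ.restrict s + ν.restrict sᶜ) Set.univ + ENNReal.ofReal (tvDist μ ν) := by
        rw [Measure.add_apply, Measure.restrict_apply_univ, Measure.restrict_apply_univ, add_assoc]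
    _ ≤ (μ ⊓ ν) Set.univ + ENNReal.ofReal (tvDist μ ν) := by gcongr

lemma ofReal_one_sub_tvDist_le_inf_univ [IsProbabilityMeasure μ] :
    ENNReal.ofReal (1 - tvDist μ ν) ≤ (μ ⊓ ν) Set.univ := by
  rw [ENNReal.ofReal_sub _ (tvDist_nonneg μ ν), ENNReal.ofReal_one, tsub_le_iff_right,
    ← measure_univ (μ := μ)]
  exact measure_univ_le_inf_univ_add_tvDist μ ν

end TotalVariation

section Product

variable {ι : Type*} [Fintype ι] {Ω : ι → Type*} [∀ i, MeasurableSpace (Ω i)]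

lemma measure_pi_mono {μ ν : ∀ i, Measure (Ω i)} [∀ i, SigmaFinite (μ i)] (h : ∀ i, μ i ≤ ν i) :
    Measure.pi μ ≤ Measure.pi ν := by
  -- `Measure.pi ν` is induced by the largest outer measure bounded by `∏ i, ν i (t i)` on boxes.
  have toOuterMeasure_le :
      (Measure.pi μ).toOuterMeasure ≤ OuterMeasure.pi fun i => (ν i).toOuterMeasure := by
    refine OuterMeasure.le_pi.2 fun t _ => ?_
    calc Measure.pi μ (Set.univ.pi t) = ∏ i, μ i (t i) := Measure.pi_pi μ t
      _ ≤ ∏ i, ν i (t i) := Finset.prod_le_prod' fun i _ => h i (t i)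
  refine Measure.le_iff.2 fun t ht => ?_
  rw [Measure.pi_def ν, toMeasure_apply _ _ ht]
  exact toOuterMeasure_le t

lemma prod_inf_univ_le_inf_pi_univ (P Q : ∀ i, Measure (Ω i)) [∀ i, IsFiniteMeasure (P i)] :
    ∏ i, (P i ⊓ Q i) Set.univ ≤ (Measure.pi P ⊓ Measure.pi Q) Set.univ := by
  have (i : ι) : IsFiniteMeasure (P i ⊓ Q i) := isFiniteMeasure_of_le (P i) inf_le_left
  have pi_inf_le : Measure.pi (fun i => P i ⊓ Q i) ≤ Measure.pi P ⊓ Measure.pi Q :=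
    le_inf (measure_pi_mono fun _ => inf_le_left) (measure_pi_mono fun _ => inf_le_right)
  calc ∏ i, (P i ⊓ Q i) Set.univ = Measure.pi (fun i => P i ⊓ Q i) Set.univ :=
        (Measure.pi_univ _).symm
    _ ≤ (Measure.pi P ⊓ Measure.pi Q) Set.univ := pi_inf_le Set.univ

end Product

section TwoPoint

variable {E : Type*} [PseudoEMetricSpace E] [MeasurableSpace E] [OpensMeasurableSpace E]

lemma min_mul_edist_mul_inf_univ_le_lintegral_edist {X : Type*} [MeasurableSpace X]
    (μ ν : Measure X) (a b : E) (v w : ℝ≥0∞) {f : X → E} (hf : Measurable f) :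
    min v w * (edist a b * (μ ⊓ ν) Set.univ) ≤
      v * ∫⁻ x, edist (f x) b ∂ν + w * ∫⁻ x, edist (f x) a ∂μ :=
  calc min v w * (edist a b * (μ ⊓ ν) Set.univ)
      = min v w * ∫⁻ _, edist a b ∂(μ ⊓ ν) := by rw [lintegral_const]
    _ ≤ min v w * ∫⁻ x, edist (f x) b + edist (f x) a ∂(μ ⊓ ν) := by
        gcongr with x
        rw [add_comm]
        exact edist_triangle_left a b (f x)
    _ = min v w * ∫⁻ x, edist (f x) b ∂(μ ⊓ ν) + min v w * ∫⁻ x, edist (f x) a ∂(μ ⊓ ν) := by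
        rw [lintegral_add_left (by fun_prop), mul_add]
    _ ≤ v * ∫⁻ x, edist (f x) b ∂ν + w * ∫⁻ x, edist (f x) a ∂μ := by
        gcongr
        exacts [min_le_left v w, inf_le_right, min_le_right v w, inf_le_left]

theorem stmt4_general {ι : Type*} [Fintype ι] {Ω : ι → Type*} [∀ i, MeasurableSpace (Ω i)]
    (P Q : ∀ i, Measure (Ω i)) [∀ i, IsProbabilityMeasure (P i)] [∀ i, IsFiniteMeasure (Q i)]
    (a b : E) (v w : ℝ≥0∞) {f : (∀ i, Ω i) → E} (hf : Measurable f) :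
    min v w * (edist a b * ∏ i, ENNReal.ofReal (1 - tvDist (P i) (Q i))) ≤
      v * ∫⁻ z, edist (f z) b ∂(Measure.pi Q) + w * ∫⁻ z, edist (f z) a ∂(Measure.pi P) := by
  have overlap : ∏ i, ENNReal.ofReal (1 - tvDist (P i) (Q i)) ≤
      (Measure.pi P ⊓ Measure.pi Q) Set.univ :=
    (Finset.prod_le_prod' fun i _ => ofReal_one_sub_tvDist_le_inf_univ (P i) (Q i)).trans
      (prod_inf_univ_le_inf_pi_univ P Q)
  calc min v w * (edist a b * ∏ i, ENNReal.ofReal (1 - tvDist (P i) (Q i)))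
      ≤ min v w * (edist a b * (Measure.pi P ⊓ Measure.pi Q) Set.univ) := by gcongr
    _ ≤ v * ∫⁻ z, edist (f z) b ∂(Measure.pi Q) + w * ∫⁻ z, edist (f z) a ∂(Measure.pi P) :=
        min_mul_edist_mul_inf_univ_le_lintegral_edist _ _ a b v w hf

end TwoPoint

/-- Quantitative fixed-`n` form of Proposition 4.4 (Unavoidable Strategic Bias): for every
estimator `ψ̂ₙ`, the average risk under the two-point strategic prior is bounded below by
`(δγ/2)·(1 − TV(P₀, Q₀))ⁿ`, which is strictly positive. -/
theorem stmt4 {Ω : Type*} [MeasurableSpace Ω]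
    (P₀ Q₀ : Measure Ω) [IsProbabilityMeasure P₀] [IsProbabilityMeasure Q₀]
    (htv : tvDist P₀ Q₀ < 1)
    (a b γ δ : ℝ) (hγ : 0 < γ) (hab : γ ≤ |a - b|)
    (hδ0 : 0 < δ) (hδ : δ ≤ 1 / 2)
    (n : ℕ) (hn : 1 ≤ n)
    (psihat : (Fin n → Ω) → ℝ) (hpsi : Measurable psihat) :
    ENNReal.ofReal (δ * γ / 2 * (1 - tvDist P₀ Q₀) ^ n) ≤
        ENNReal.ofReal (1 - δ) *
            (∫⁻ z, ENNReal.ofReal |psihat z - b| ∂(Measure.pi fun _ : Fin n => Q₀)) +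
          ENNReal.ofReal δ *
            ∫⁻ z, ENNReal.ofReal |psihat z - a| ∂(Measure.pi fun _ : Fin n => P₀) ∧
      0 < ENNReal.ofReal (δ * γ / 2 * (1 - tvDist P₀ Q₀) ^ n) := by
  have one_sub_tvDist_pos : 0 < 1 - tvDist P₀ Q₀ := sub_pos.2 htv
  have min_weight : min (1 - δ) δ = δ := min_eq_right (by linarith)
  refine ⟨?_, ENNReal.ofReal_pos.2 (by positivity)⟩
  calc ENNReal.ofReal (δ * γ / 2 * (1 - tvDist P₀ Q₀) ^ n)
      ≤ ENNReal.ofReal (δ * (|a - b| * (1 - tvDist P₀ Q₀) ^ n)) := by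
        rw [mul_div_assoc, mul_assoc]
        gcongr
        linarith
    _ = min (ENNReal.ofReal (1 - δ)) (ENNReal.ofReal δ) *
          (edist a b * ∏ _ : Fin n, ENNReal.ofReal (1 - tvDist P₀ Q₀)) := by
        rw [← ENNReal.ofReal_min, min_weight, edist_dist, Real.dist_eq, Fin.prod_const,
          ← ENNReal.ofReal_pow one_sub_tvDist_pos.le, ← ENNReal.ofReal_mul (abs_nonneg _),
          ← ENNReal.ofReal_mul hδ0.le]
    _ ≤ _ := by
        simpa only [edist_dist, Real.dist_eq] using stmt4_general (fun _ : Fin n => P₀)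
          (fun _ => Q₀) a b (ENNReal.ofReal (1 - δ)) (ENNReal.ofReal δ) hpsi
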